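/- There exist universal constants C, C', c > 0 such that the following holds. Let x ∈ ℝ^n, let a₁, …, a_m be independent standard Gaussian vectors a_ℓ ∼ N(0, I_n), and let y_ℓ = |a_ℓ^T x|² for ℓ = 1, …, m. If m ≥ C n, then with probability at least 1 − C' e^{−c m}, the matrix X = x x^T is the unique solution of the PhaseLift problem: minimize trace(Z) over symmetric positive semidefinite matrices Z ∈ ℝ^{n×n} subject to ⟨a_ℓ a_ℓ^T, Z⟩ = y_ℓ for all ℓ = 1, …, m. -/

import Mathlib

noncomputable section

open scoped BigOperators ENNReal NNReal
open Matrix MeasureTheory ProbabilityTheory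

/-- The law of `m` independent standard Gaussian vectors `a_ℓ ∼ N(0, I_n)`. -/
def gaussianVectors (n m : ℕ) : Measure (Fin m → Fin n → ℝ) :=
  Measure.pi fun _ : Fin m => Measure.pi fun _ : Fin n => gaussianReal 0 1

lemma exists_mgf_lt_one {E : Type*} [NormedAddCommGroup E] [NormedSpace ℝ E]
    [MeasurableSpace E] [BorelSpace E] [CompleteSpace E] [SecondCountableTopology E]
    (μ : Measure E) [IsGaussian μ] (f : E → ℝ) (hf : Measurable f) (A : ℝ) (hA : 0 < A)
    (hfA : ∀ x, |f x| ≤ A * (1 + ‖x‖ ^ 2)) (hneg : ∫ x, f x ∂μ < 0) :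
    ∃ s : ℝ, 0 < s ∧ ∃ κ : ℝ, 0 < κ ∧ Integrable (fun x => Real.exp (s * f x)) μ ∧
      ∫ x, Real.exp (s * f x) ∂μ ≤ Real.exp (-κ) := by
  obtain ⟨C, hC, hint⟩ := IsGaussian.exists_integrable_exp_sq μ
  have key : ∀ t : ℝ, |t| ≤ C / A → Integrable (fun x => Real.exp (t * f x)) μ := by
    intro t ht
    refine Integrable.mono' (hint.const_mul (Real.exp C)) (by fun_prop) ?_
    filter_upwards with x
    rw [Real.norm_eq_abs, Real.abs_exp, ← Real.exp_add]
    apply Real.exp_le_exp.2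
    calc t * f x ≤ |t * f x| := le_abs_self _
      _ = |t| * |f x| := abs_mul _ _
      _ ≤ (C / A) * (A * (1 + ‖x‖ ^ 2)) := by
          gcongr
          exact hfA x
      _ = C + C * ‖x‖ ^ 2 := by field_simp
  have hCA : 0 < C / A := by positivity
  have h0 : (0 : ℝ) ∈ interior (integrableExpSet f μ) := by
    rw [mem_interior_iff_mem_nhds]
    filter_upwards [Metric.ball_mem_nhds (0 : ℝ) hCA] with t ht
    refine key t ?_
    rw [Metric.mem_ball, Real.dist_eq, sub_zero] at ht
    exact ht.le
  have hd := hasDerivAt_mgf h0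
  simp only [zero_mul, Real.exp_zero, mul_one] at hd
  have hlt : ∀ᶠ s in nhdsWithin (0 : ℝ) (Set.Ioi 0), mgf f μ s < 1 := by
    have h1 := hd.hasDerivWithinAt (s := Set.Ioi 0)
    have h2 := hasDerivWithinAt_iff_tendsto_slope.1 h1
    have h3 := h2.eventually (gt_mem_nhds hneg)
    have : Set.Ioi (0:ℝ) \ {0} = Set.Ioi 0 := by ext; simp +contextual
    rw [this] at h3
    filter_upwards [h3, self_mem_nhdsWithin] with s hs hs0
    have hs0 : 0 < s := hs0
    rw [slope_def_field, mgf_zero] at hs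
    rw [sub_zero, div_lt_iff₀ hs0] at hs
    linarith
  have hmem : ∀ᶠ s in nhdsWithin (0 : ℝ) (Set.Ioi 0), s ∈ integrableExpSet f μ :=
    nhdsWithin_le_nhds (mem_interior_iff_mem_nhds.1 h0)
  obtain ⟨s, ⟨h1, h2⟩, h3⟩ := ((hlt.and hmem).and self_mem_nhdsWithin).exists
  have hpos : 0 < mgf f μ s := mgf_pos h2
  refine ⟨s, h3, -Real.log (mgf f μ s), ?_, h2, ?_⟩
  · have := Real.log_neg hpos h1
    linarith
  · rw [neg_neg, Real.exp_log hpos]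
    rfl

lemma chernoff_gv {E : Type*} [NormedAddCommGroup E] [NormedSpace ℝ E]
    [MeasurableSpace E] [BorelSpace E] [CompleteSpace E] [SecondCountableTopology E]
    (μ : Measure E) [IsGaussian μ] (f : E → ℝ) (hf : Measurable f) (A : ℝ) (hA : 0 < A)
    (hfA : ∀ x, |f x| ≤ A * (1 + ‖x‖ ^ 2)) (hneg : ∫ x, f x ∂μ < 0) :
    ∃ κ : ℝ, 0 < κ ∧ ∀ (n m : ℕ) (T : (Fin n → ℝ) → E), Measurable T →
      (Measure.pi fun _ : Fin n => gaussianReal 0 1).map T = μ →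
      gaussianVectors n m {a | 0 ≤ ∑ ℓ, f (T (a ℓ))} ≤ ENNReal.ofReal (Real.exp (-κ * m)) := by
  obtain ⟨s, hs, κ, hκ, hint, hle⟩ := exists_mgf_lt_one μ f hf A hA hfA hneg
  refine ⟨κ, hκ, fun n m T hT hmap => ?_⟩
  set ν : Measure (Fin n → ℝ) := Measure.pi fun _ : Fin n => gaussianReal 0 1 with hν
  have hmeas : Measurable fun x => Real.exp (s * f x) := by fun_prop
  have h1 : ∫ x, Real.exp (s * f (T x)) ∂ν ≤ Real.exp (-κ) := by
    rw [← hmap, integral_map hT.aemeasurable hmeas.aestronglyMeasurable] at hle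
    exact hle
  have hint1 : Integrable (fun x => Real.exp (s * f (T x))) ν := by
    rw [← hmap] at hint
    exact (integrable_map_measure hmeas.aestronglyMeasurable hT.aemeasurable).1 hint
  have h2 : ∫ a, ∏ ℓ : Fin m, Real.exp (s * f (T (a ℓ))) ∂(gaussianVectors n m)
      = ∏ ℓ : Fin m, ∫ x, Real.exp (s * f (T x)) ∂ν := by
    exact integral_fintype_prod_eq_prod (𝕜 := ℝ) (fun _ : Fin m => fun x => Real.exp (s * f (T x)))
  have hint2 : Integrable (fun a => ∏ ℓ : Fin m, Real.exp (s * f (T (a ℓ)))) (gaussianVectors n m) :=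
    Integrable.fintype_prod (f := fun _ : Fin m => fun x => Real.exp (s * f (T x))) fun _ => hint1
  have h3 := mul_meas_ge_le_integral_of_nonneg (μ := gaussianVectors n m)
    (f := fun a => ∏ ℓ : Fin m, Real.exp (s * f (T (a ℓ))))
    (Filter.Eventually.of_forall fun a => Finset.prod_nonneg fun _ _ => (Real.exp_pos _).le) hint2 1
  rw [one_mul, h2] at h3
  have : IsProbabilityMeasure (gaussianVectors n m) := by unfold gaussianVectors; infer_instance
  rw [← ofReal_measureReal]
  apply ENNReal.ofReal_le_ofReal
  calc _ ≤ (gaussianVectors n m).real {a | 1 ≤ ∏ ℓ : Fin m, Real.exp (s * f (T (a ℓ)))} := by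
        refine measureReal_mono ?_ (measure_ne_top _ _)
        intro a ha
        simp only [Set.mem_ofPred_eq] at ha ⊢
        rw [← Real.exp_sum, ← Finset.mul_sum]
        exact Real.one_le_exp (by positivity)
    _ ≤ _ := h3
    _ ≤ ∏ ℓ : Fin m, Real.exp (-κ) := Finset.prod_le_prod
        (fun _ _ => integral_nonneg fun _ => (Real.exp_pos _).le) fun _ _ => h1
    _ = _ := by
        rw [← Real.exp_sum]; simp [mul_comm]

lemma map_single {n : ℕ} (u : EuclideanSpace ℝ (Fin n)) (hu : ‖u‖ = 1) :
    (Measure.pi fun _ : Fin n => gaussianReal 0 1).map (fun a => ∑ i, a i * u i)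
      = gaussianReal 0 1 := by
  have h : (fun a : Fin n → ℝ => ∑ i, a i * u i) =
      (innerSL ℝ u) ∘ (WithLp.toLp 2) := by
    ext a
    simp [PiLp.inner_apply]
  rw [h, ← Measure.map_map (by fun_prop) (by fun_prop), map_pi_eq_stdGaussian,
    IsGaussian.map_eq_gaussianReal, integral_strongDual_stdGaussian, variance_dual_stdGaussian]
  simp [hu]

lemma map_pair {n : ℕ} (u w : EuclideanSpace ℝ (Fin n)) (hu : ‖u‖ = 1) (hw : ‖w‖ = 1)
    (huw : inner ℝ u w = 0) :
    (Measure.pi fun _ : Fin n => gaussianReal 0 1).map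
      (fun a => (∑ i, a i * u i, ∑ i, a i * w i))
      = (gaussianReal 0 1).prod (gaussianReal 0 1) := by
  have h1 : IndepFun (innerSL ℝ u) (innerSL ℝ w) (stdGaussian (EuclideanSpace ℝ (Fin n))) := by
    apply HasGaussianLaw.indepFun_of_covariance_eq_zero
    · refine ⟨?_⟩
      have := isGaussian_map (μ := stdGaussian (EuclideanSpace ℝ (Fin n)))
        ((innerSL ℝ u).prod (innerSL ℝ w))
      exact this
    · have := congrArg (fun L => L u w)
        (covarianceBilin_stdGaussian (E := EuclideanSpace ℝ (Fin n)))
      change covarianceBilin (stdGaussian (EuclideanSpace ℝ (Fin n))) u w = inner ℝ u w at this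
      rw [huw, covarianceBilin_apply_eq_cov (IsGaussian.memLp_two_id)] at this
      exact this
  have h2 := (indepFun_iff_map_prod_eq_prod_map_map (by fun_prop) (by fun_prop)).1 h1
  rw [← map_pi_eq_stdGaussian, Measure.map_map (by fun_prop) (by fun_prop),
    Measure.map_map (by fun_prop) (by fun_prop),
    Measure.map_map (by fun_prop) (by fun_prop)] at h2
  have hh : ∀ v : EuclideanSpace ℝ (Fin n), (innerSL ℝ v) ∘ (WithLp.toLp 2) =
      fun a : Fin n → ℝ => ∑ i, a i * v i := by
    intro v
    ext a
    simp [PiLp.inner_apply]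
  rw [hh, hh, map_single u hu, map_single w hw] at h2
  rw [← h2]
  congr 1

/-- The bounded weight used for the dual certificate. -/
def phi (g : ℝ) : ℝ := 1 / 2 - 1 / (1 + g ^ 2)

lemma phi_abs_le (g : ℝ) : |phi g| ≤ 1 / 2 := by
  unfold phi
  have h : 0 < 1 + g ^ 2 := by positivity
  have h1 : 1 / (1 + g ^ 2) ≤ 1 := by
    rw [div_le_one h]; nlinarith [sq_nonneg g]
  have h2 : 0 < 1 / (1 + g ^ 2) := by positivity
  rw [abs_le]; constructor <;> linarith

lemma phi_measurable : Measurable phi := by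
  unfold phi; fun_prop

lemma gauss_sq_int : Integrable (fun g : ℝ => g ^ 2) (gaussianReal 0 1) := by
  have := (IsGaussian.memLp_two_id (μ := gaussianReal 0 1)).integrable_sq
  simpa using this

lemma gauss_id_int : Integrable (fun g : ℝ => g) (gaussianReal 0 1) := by
  have := (IsGaussian.memLp_two_id (μ := gaussianReal 0 1)).integrable (by norm_num)
  exact this

lemma gauss_sq : ∫ g : ℝ, g ^ 2 ∂(gaussianReal 0 1) = 1 := by
  have h := variance_id_gaussianReal (μ := 0) (v := 1)
  rw [variance_of_integral_eq_zero (by fun_prop) (by simp)] at h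
  simpa using h

lemma phi_int : Integrable phi (gaussianReal 0 1) := by
  refine Integrable.mono' (integrable_const (1 / 2 : ℝ)) phi_measurable.aestronglyMeasurable ?_
  filter_upwards with g using phi_abs_le g

lemma phi_sq_int : Integrable (fun g => phi g * g ^ 2) (gaussianReal 0 1) := by
  refine Integrable.mono' gauss_sq_int
    (phi_measurable.mul (by fun_prop)).aestronglyMeasurable ?_
  filter_upwards with g
  rw [Real.norm_eq_abs, abs_mul, abs_of_nonneg (sq_nonneg g)]
  nlinarith [phi_abs_le g, sq_nonneg g]

lemma phi_id_int : Integrable (fun g => phi g * g) (gaussianReal 0 1) := by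
  refine Integrable.mono' gauss_id_int.norm
    (phi_measurable.mul (by fun_prop)).aestronglyMeasurable ?_
  filter_upwards with g
  rw [Real.norm_eq_abs, abs_mul, Real.norm_eq_abs]
  nlinarith [phi_abs_le g, abs_nonneg g]

lemma integral_pos_of_finite (f : ℝ → ℝ) (hf : ∀ x, 0 ≤ f x)
    (hi : Integrable f (gaussianReal 0 1)) (S : Finset ℝ) (hS : ∀ x, f x = 0 → x ∈ S) :
    0 < ∫ x, f x ∂(gaussianReal 0 1) := by
  rcases (integral_nonneg hf : 0 ≤ ∫ x, f x ∂(gaussianReal 0 1)).lt_or_eq with h | h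
  · exact h
  · exfalso
    have h1 := (integral_eq_zero_iff_of_nonneg hf hi).1 h.symm
    have : NullSingletonClass (gaussianReal 0 1) := nullSingletonClass_gaussianReal (by norm_num)
    have h2 : ∀ᵐ x ∂(gaussianReal 0 1), x ∉ S := by
      have := S.finite_toSet.measure_zero (gaussianReal 0 1)
      exact measure_eq_zero_iff_ae_notMem.1 this
    have h3 : ∀ᵐ x ∂(gaussianReal 0 1), False := by
      filter_upwards [h1, h2] with x hx hx2 using hx2 (hS x hx)
    rw [Filter.eventually_false_iff_eq_bot, ae_eq_bot] at h3
    exact IsProbabilityMeasure.ne_zero (gaussianReal 0 1) h3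

lemma sq_sub_int (k : ℝ) : Integrable (fun g : ℝ => k * (g ^ 2 - 1)) (gaussianReal 0 1) :=
  (gauss_sq_int.sub (integrable_const _)).const_mul _

lemma exists_rho : ∃ ρ : ℝ, 0 < ρ ∧ ∫ g, phi g ∂(gaussianReal 0 1) = -ρ ∧
    ∫ g, phi g * g ^ 2 ∂(gaussianReal 0 1) = ρ := by
  have hpos := integral_pos_of_finite (fun g => (1 / 4) * (g ^ 2 - 1) - phi g) ?_ ?_ {1, -1} ?_
  · have e1 : ∫ g, ((1 / 4) * (g ^ 2 - 1) - phi g) ∂(gaussianReal 0 1)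
        = - ∫ g, phi g ∂(gaussianReal 0 1) := by
      rw [integral_sub (sq_sub_int _) phi_int,
        integral_const_mul, integral_sub gauss_sq_int (integrable_const _), gauss_sq]
      simp
    have e2 : ∫ g, phi g * g ^ 2 ∂(gaussianReal 0 1)
        = - ∫ g, phi g ∂(gaussianReal 0 1) := by
      have : ∀ g, phi g * g ^ 2 = (1 / 2) * (g ^ 2 - 1) - phi g := by
        intro g
        unfold phi
        have h : 1 + g ^ 2 ≠ 0 := by positivity
        field_simp
        ring
      simp_rw [this]
      rw [integral_sub (sq_sub_int _) phi_int,
        integral_const_mul, integral_sub gauss_sq_int (integrable_const _), gauss_sq]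
      simp
    rw [e1] at hpos
    exact ⟨_, hpos, by simp, e2⟩
  · intro g
    have : (1 / 4) * (g ^ 2 - 1) - phi g = (g ^ 2 - 1) ^ 2 / (4 * (1 + g ^ 2)) := by
      unfold phi
      have h : 1 + g ^ 2 ≠ 0 := by positivity
      field_simp
      ring
    simp only [this]
    positivity
  · exact (sq_sub_int _).sub phi_int
  · intro g hg
    have h : 1 + g ^ 2 ≠ 0 := by positivity
    unfold phi at hg
    field_simp at hg
    have : (g ^ 2 - 1) ^ 2 = 0 := by linarith
    have : (g - 1) * (g + 1) = 0 := by
      have := pow_eq_zero_iff (two_ne_zero) |>.1 this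
      linarith
    rcases mul_eq_zero.1 this with h | h
    · simp; left; linarith
    · simp; right; linarith

lemma gauss_abs_pos : 0 < ∫ g : ℝ, |g| ∂(gaussianReal 0 1) :=
  integral_pos_of_finite _ (fun _ => abs_nonneg _) gauss_id_int.norm {0} (by simp)

/-- All pointwise tail bounds. -/
lemma exists_events : ∃ ρ c : ℝ, 0 < ρ ∧ 0 < c ∧ ∀ ε : ℝ, 0 < ε → ∃ κ : ℝ, 0 < κ ∧
    ∀ (n m : ℕ) (u : EuclideanSpace ℝ (Fin n)), ‖u‖ = 1 →
      (gaussianVectors n m {a | 0 ≤ ∑ ℓ, ((∑ i, a ℓ i * u i) ^ 2 - 2)}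
        ≤ ENNReal.ofReal (Real.exp (-κ * m))) ∧
      (gaussianVectors n m {a | 0 ≤ ∑ ℓ, (ρ - phi (∑ i, a ℓ i * u i) * (∑ i, a ℓ i * u i) ^ 2)}
        ≤ ENNReal.ofReal (Real.exp (-κ * m))) ∧
      ∀ w : EuclideanSpace ℝ (Fin n), ‖w‖ = 1 → inner ℝ u w = 0 →
      (gaussianVectors n m {a | 0 ≤ ∑ ℓ, ((∑ i, a ℓ i * w i) ^ 2 - 2)}
        ≤ ENNReal.ofReal (Real.exp (-κ * m))) ∧
      (gaussianVectors n m {a | 0 ≤ ∑ ℓ, (phi (∑ i, a ℓ i * u i) * (∑ i, a ℓ i * w i) ^ 2 + ρ)}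
        ≤ ENNReal.ofReal (Real.exp (-κ * m))) ∧
      (gaussianVectors n m {a | 0 ≤ ∑ ℓ,
          (phi (∑ i, a ℓ i * u i) * (∑ i, a ℓ i * u i) * (∑ i, a ℓ i * w i) - ε)}
        ≤ ENNReal.ofReal (Real.exp (-κ * m))) ∧
      (gaussianVectors n m {a | 0 ≤ ∑ ℓ,
          (-(phi (∑ i, a ℓ i * u i) * (∑ i, a ℓ i * u i) * (∑ i, a ℓ i * w i)) - ε)}
        ≤ ENNReal.ofReal (Real.exp (-κ * m))) ∧
      (gaussianVectors n m {a | 0 ≤ ∑ ℓ, (c - |∑ i, a ℓ i * u i| * |∑ i, a ℓ i * w i|)}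
        ≤ ENNReal.ofReal (Real.exp (-κ * m))) := by
  obtain ⟨ρ, hρ, hρ1, hρ2⟩ := exists_rho
  set b := ∫ g : ℝ, |g| ∂(gaussianReal 0 1) with hb
  have hb0 : 0 < b := gauss_abs_pos
  have hpm := phi_measurable
  refine ⟨ρ / 2, b * b / 2, by positivity, by positivity, fun ε hε => ?_⟩
  set γ := gaussianReal 0 1 with hγ
  have n1 : ∀ p : ℝ × ℝ, |p.1| ≤ ‖p‖ := fun p => norm_fst_le p
  have n2 : ∀ p : ℝ × ℝ, |p.2| ≤ ‖p‖ := fun p => norm_snd_le p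
  have n3 : ∀ p : ℝ × ℝ, |p.1| * |p.2| ≤ ‖p‖ ^ 2 := fun p => by
    rw [sq]; exact mul_le_mul (n1 p) (n2 p) (abs_nonneg _) (norm_nonneg _)
  have n4 : ∀ p : ℝ × ℝ, p.2 ^ 2 ≤ ‖p‖ ^ 2 := fun p => by
    rw [← sq_abs]; exact pow_le_pow_left₀ (abs_nonneg _) (n2 p) 2
  obtain ⟨k1, hk1, H1⟩ := chernoff_gv γ (fun g => g ^ 2 - 2) (by fun_prop) 2 (by norm_num)
    (by intro x
        rw [Real.norm_eq_abs, sq_abs, abs_le]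
        constructor <;> nlinarith [sq_nonneg x])
    (by rw [integral_sub gauss_sq_int (integrable_const _), gauss_sq]; simp)
  obtain ⟨k2, hk2, H2⟩ := chernoff_gv γ (fun g => ρ / 2 - phi g * g ^ 2) (by fun_prop) (ρ + 1)
    (by linarith)
    (by intro x
        have := abs_le.1 (phi_abs_le x)
        rw [Real.norm_eq_abs, sq_abs, abs_le]
        constructor <;> nlinarith [sq_nonneg x])
    (by rw [integral_sub (integrable_const _) phi_sq_int, hρ2]; simp; linarith)
  have I3 : Integrable (fun p : ℝ × ℝ => p.2 ^ 2) (γ.prod γ) := gauss_sq_int.comp_snd γ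
  obtain ⟨k3, hk3, H3⟩ := chernoff_gv (γ.prod γ) (fun p => p.2 ^ 2 - 2) (by fun_prop) 2
    (by norm_num)
    (by intro p
        have := n4 p
        rw [abs_le]
        constructor <;> nlinarith [sq_nonneg p.2])
    (by have := integral_prod_mul (μ := γ) (ν := γ) (fun _ => (1 : ℝ)) (fun x => x ^ 2)
        rw [gauss_sq] at this
        simp only [one_mul] at this
        rw [integral_sub I3 (integrable_const _), this]; simp)
  have I4 : Integrable (fun p : ℝ × ℝ => phi p.1 * p.2 ^ 2) (γ.prod γ) :=
    phi_int.mul_prod gauss_sq_int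
  obtain ⟨k4, hk4, H4⟩ := chernoff_gv (γ.prod γ) (fun p => phi p.1 * p.2 ^ 2 + ρ / 2)
    (by fun_prop) (ρ + 1) (by linarith)
    (by intro p
        have := n4 p
        have := abs_le.1 (phi_abs_le p.1)
        rw [abs_le]
        constructor <;> nlinarith [sq_nonneg p.2])
    (by have := integral_prod_mul (μ := γ) (ν := γ) phi (fun x => x ^ 2)
        rw [gauss_sq, hρ1] at this
        rw [integral_add I4 (integrable_const _), this]; simp; linarith)
  have I5 : Integrable (fun p : ℝ × ℝ => phi p.1 * p.1 * p.2) (γ.prod γ) :=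
    phi_id_int.mul_prod gauss_id_int
  have J5 : ∫ p : ℝ × ℝ, phi p.1 * p.1 * p.2 ∂(γ.prod γ) = 0 := by
    have := integral_prod_mul (μ := γ) (ν := γ) (fun x => phi x * x) (fun x => x)
    rw [this]
    simp [γ]
  have B5 : ∀ p : ℝ × ℝ, |phi p.1 * p.1 * p.2| ≤ ‖p‖ ^ 2 := by
    intro p
    have := n3 p
    have := phi_abs_le p.1
    rw [abs_mul, abs_mul, mul_assoc]
    have h0 : 0 ≤ |p.1| * |p.2| := by positivity
    nlinarith [abs_nonneg (phi p.1)]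
  obtain ⟨k5, hk5, H5⟩ := chernoff_gv (γ.prod γ) (fun p => phi p.1 * p.1 * p.2 - ε)
    (by fun_prop) (ε + 1) (by linarith)
    (by intro p
        have := abs_le.1 (B5 p)
        rw [abs_le]
        constructor <;> nlinarith [sq_nonneg ‖p‖])
    (by rw [integral_sub I5 (integrable_const _), J5]; simp; linarith)
  obtain ⟨k6, hk6, H6⟩ := chernoff_gv (γ.prod γ) (fun p => -(phi p.1 * p.1 * p.2) - ε)
    (by fun_prop) (ε + 1) (by linarith)
    (by intro p
        have := abs_le.1 (B5 p)
        rw [abs_le]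
        constructor <;> nlinarith [sq_nonneg ‖p‖])
    (by have I6 : Integrable (fun p : ℝ × ℝ => -(phi p.1 * p.1 * p.2)) (γ.prod γ) := I5.neg
        rw [integral_sub I6 (integrable_const _), integral_neg, J5]; simp; linarith)
  have I7 : Integrable (fun p : ℝ × ℝ => |p.1| * |p.2|) (γ.prod γ) :=
    gauss_id_int.norm.mul_prod gauss_id_int.norm
  have J7 : ∫ p : ℝ × ℝ, |p.1| * |p.2| ∂(γ.prod γ) = b * b :=
    integral_prod_mul (μ := γ) (ν := γ) (fun x => |x|) (fun x => |x|)
  have hbb : 0 < b * b := by positivity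
  obtain ⟨k7, hk7, H7⟩ := chernoff_gv (γ.prod γ) (fun p => b * b / 2 - |p.1| * |p.2|)
    (by fun_prop) (b * b + 1) (by positivity)
    (by intro p
        have := n3 p
        have h0 : 0 ≤ |p.1| * |p.2| := by positivity
        rw [abs_le]
        constructor <;> nlinarith [sq_nonneg ‖p‖])
    (by rw [integral_sub (integrable_const _) I7, J7]; simp; linarith)
  obtain ⟨κ, hκ, l1, l2, l3, l4, l5, l6, l7⟩ : ∃ κ : ℝ, 0 < κ ∧ κ ≤ k1 ∧ κ ≤ k2 ∧ κ ≤ k3 ∧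
      κ ≤ k4 ∧ κ ≤ k5 ∧ κ ≤ k6 ∧ κ ≤ k7 := by
    refine ⟨min k1 (min k2 (min k3 (min k4 (min k5 (min k6 k7))))), ?_, ?_⟩
    · simp [*]
    · simp
  have E : ∀ (m : ℕ) (k : ℝ), κ ≤ k →
      ENNReal.ofReal (Real.exp (-k * m)) ≤ ENNReal.ofReal (Real.exp (-κ * m)) := by
    intro m k hk
    apply ENNReal.ofReal_le_ofReal
    apply Real.exp_le_exp.2
    have : (0 : ℝ) ≤ m := by positivity
    nlinarith
  refine ⟨κ, hκ, fun n m u hu => ⟨?_, ?_, fun w hw huw => ⟨?_, ?_, ?_, ?_, ?_⟩⟩⟩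
  · exact (H1 n m _ (by fun_prop) (map_single u hu)).trans (E m _ l1)
  · exact (H2 n m _ (by fun_prop) (map_single u hu)).trans (E m _ l2)
  · exact (H3 n m _ (by fun_prop) (map_pair u w hu hw huw)).trans (E m _ l3)
  · exact (H4 n m _ (by fun_prop) (map_pair u w hu hw huw)).trans (E m _ l4)
  · exact (H5 n m _ (by fun_prop) (map_pair u w hu hw huw)).trans (E m _ l5)
  · exact (H6 n m _ (by fun_prop) (map_pair u w hu hw huw)).trans (E m _ l6)
  · exact (H7 n m _ (by fun_prop) (map_pair u w hu hw huw)).trans (E m _ l7)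

lemma card_separated {E : Type*} [NormedAddCommGroup E] [NormedSpace ℝ E] [FiniteDimensional ℝ E]
    (η : ℝ) (hη : 0 < η) (s : Finset E) (hs : ∀ c ∈ s, ‖c‖ ≤ 1)
    (h : ∀ c ∈ s, ∀ d ∈ s, c ≠ d → η ≤ ‖c - d‖) :
    (s.card : ℝ) ≤ (1 + 2 / η) ^ Module.finrank ℝ E := by
  borelize E
  let μ : Measure E := Measure.addHaar
  set δ : ℝ := η / 2 with hδ
  set ρ : ℝ := 1 + η / 2 with hρ
  have δpos : 0 < δ := by positivity
  have ρpos : 0 < ρ := by positivity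
  set A := ⋃ c ∈ s, Metric.ball (c : E) δ with hA
  have D : Set.Pairwise (s : Set E) (Function.onFun Disjoint fun c => Metric.ball (c : E) δ) := by
    rintro c hc d hd hcd
    apply Metric.ball_disjoint_ball
    rw [dist_eq_norm]
    have := h c hc d hd hcd
    linarith
  have A_subset : A ⊆ Metric.ball (0 : E) ρ := by
    refine Set.iUnion₂_subset fun x hx => ?_
    apply Metric.ball_subset_ball'
    rw [dist_zero_right]
    have := hs x hx
    linarith
  have I :
    (s.card : ℝ≥0∞) * ENNReal.ofReal (δ ^ Module.finrank ℝ E) * μ (Metric.ball 0 1) ≤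
      ENNReal.ofReal (ρ ^ Module.finrank ℝ E) * μ (Metric.ball 0 1) :=
    calc
      (s.card : ℝ≥0∞) * ENNReal.ofReal (δ ^ Module.finrank ℝ E) * μ (Metric.ball 0 1) = μ A := by
        rw [hA, measure_biUnion_finset D fun c _ => measurableSet_ball]
        simp only [μ.addHaar_ball_of_pos _ δpos]
        simp only [Finset.sum_const, nsmul_eq_mul, mul_assoc]
      _ ≤ μ (Metric.ball (0 : E) ρ) := measure_mono A_subset
      _ = ENNReal.ofReal (ρ ^ Module.finrank ℝ E) * μ (Metric.ball 0 1) := by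
        simp only [μ.addHaar_ball_of_pos _ ρpos]
  have J : (s.card : ℝ≥0∞) * ENNReal.ofReal (δ ^ Module.finrank ℝ E)
      ≤ ENNReal.ofReal (ρ ^ Module.finrank ℝ E) :=
    (ENNReal.mul_le_mul_iff_left (Metric.measure_ball_pos _ _ zero_lt_one).ne'
      measure_ball_lt_top.ne).1 I
  have K := ENNReal.toReal_le_of_le_ofReal (pow_nonneg ρpos.le _) J
  rw [ENNReal.toReal_mul, ENNReal.toReal_natCast, ENNReal.toReal_ofReal (by positivity),
    ← le_div_iff₀ (by positivity), ← div_pow] at K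
  have e : ρ / δ = 1 + 2 / η := by
    rw [hρ, hδ]; field_simp; ring
  rwa [e] at K

lemma exists_net {E : Type*} [NormedAddCommGroup E] [NormedSpace ℝ E] [FiniteDimensional ℝ E]
    (η : ℝ) (hη : 0 < η) (s : Set E) (hs : ∀ c ∈ s, ‖c‖ ≤ 1) :
    ∃ N : Finset E, (∀ w ∈ N, w ∈ s) ∧ (∀ v ∈ s, ∃ w ∈ N, ‖v - w‖ ≤ η) ∧
      (N.card : ℝ) ≤ (1 + 2 / η) ^ Module.finrank ℝ E := by
  classical
  let P : ℕ → Prop := fun k => ∃ N : Finset E, (∀ w ∈ N, w ∈ s) ∧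
    (∀ c ∈ N, ∀ d ∈ N, c ≠ d → η ≤ ‖c - d‖) ∧ N.card = k
  let B := ⌈(1 + 2 / η) ^ Module.finrank ℝ E⌉₊
  have hB : ∀ k, P k → k ≤ B := by
    rintro k ⟨N, h1, h2, rfl⟩
    have := card_separated η hη N (fun c hc => hs c (h1 c hc)) h2
    exact_mod_cast this.trans (Nat.le_ceil _)
  have h0 : P 0 := ⟨∅, by simp, by simp, by simp⟩
  obtain ⟨N, h1, h2, h3⟩ : P (Nat.findGreatest P B) := Nat.findGreatest_spec (Nat.zero_le _) h0
  refine ⟨N, h1, ?_, card_separated η hη N (fun c hc => hs c (h1 c hc)) h2⟩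
  intro v hv
  by_contra! hcon
  have hvN : v ∉ N := fun hvN => by
    have := hcon v hvN
    simp at this
    linarith
  have hP : P (N.card + 1) := by
    refine ⟨insert v N, ?_, ?_, Finset.card_insert_of_notMem hvN⟩
    · intro w hw
      rcases Finset.mem_insert.1 hw with rfl | hw
      · exact hv
      · exact h1 w hw
    · intro c hc d hd hcd
      rcases Finset.mem_insert.1 hc with hcv | hcN <;>
        rcases Finset.mem_insert.1 hd with hdv | hdN
      · exact absurd (hcv.trans hdv.symm) hcd
      · rw [hcv]; exact (hcon d hdN).le
      · rw [hdv, norm_sub_rev]; exact (hcon c hcN).le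
      · exact h2 c hcN d hdN hcd
  have := Nat.le_findGreatest (hB _ hP) hP
  omega

section det
variable {E : Type*} [NormedAddCommGroup E] [InnerProductSpace ℝ E] [FiniteDimensional ℝ E]

lemma net_q {m : ℕ} (A : Fin m → E) (u : E) (N : Finset E)
    (hN : ∀ w ∈ N, ‖w‖ = 1 ∧ inner ℝ u w = 0) (η : ℝ) (hη0 : 0 < η) (hη : η ≤ 1 / 2)
    (hcov : ∀ v : E, ‖v‖ = 1 → inner ℝ u v = 0 → ∃ w ∈ N, ‖v - w‖ ≤ η)
    (h1 : ∀ w ∈ N, ∑ ℓ, (inner ℝ (A ℓ) w) ^ 2 ≤ 2 * m) :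
    ∀ v : E, inner ℝ u v = 0 → ∑ ℓ, (inner ℝ (A ℓ) v) ^ 2 ≤ 8 * m * ‖v‖ ^ 2 := by
  intro v hv
  set q : E → ℝ := fun v => ∑ ℓ, (inner ℝ (A ℓ) v) ^ 2 with hq
  have qs : ∀ (r : ℝ) (v : E), q (r • v) = r ^ 2 * q v := by
    intro r v
    simp only [hq, Finset.mul_sum, real_inner_smul_right, mul_pow]
  let S : Set E := {v | ‖v‖ = 1 ∧ inner ℝ u v = 0}
  have hS : IsCompact S := by
    refine (isCompact_sphere (0 : E) 1).of_isClosed_subset ?_ ?_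
    · exact (isClosed_eq continuous_norm continuous_const).inter
        (isClosed_eq (by fun_prop) continuous_const)
    · intro v hv
      simpa using hv.1
  have hqc : Continuous q := by
    simp only [hq]; fun_prop
  by_cases hv0 : v = 0
  · subst hv0
    simp [hq]
  have hnv : 0 < ‖v‖ := norm_pos_iff.2 hv0
  have hvS : (‖v‖⁻¹ • v) ∈ S := by
    refine ⟨?_, ?_⟩
    · rw [norm_smul, norm_inv, norm_norm, inv_mul_cancel₀ hnv.ne']
    · rw [real_inner_smul_right, hv, mul_zero]
  obtain ⟨v0, hv0S, hmax⟩ := hS.exists_isMaxOn ⟨_, hvS⟩ hqc.continuousOn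
  have hle : ∀ d : E, inner ℝ u d = 0 → q d ≤ ‖d‖ ^ 2 * q v0 := by
    intro d hd
    by_cases hd0 : d = 0
    · subst hd0
      simp [hq]
    have hnd : 0 < ‖d‖ := norm_pos_iff.2 hd0
    have hdS : (‖d‖⁻¹ • d) ∈ S := by
      refine ⟨?_, ?_⟩
      · rw [norm_smul, norm_inv, norm_norm, inv_mul_cancel₀ hnd.ne']
      · rw [real_inner_smul_right, hd, mul_zero]
    have h := hmax hdS
    have h : q (‖d‖⁻¹ • d) ≤ q v0 := h
    rw [qs, inv_pow, inv_mul_le_iff₀ (by positivity)] at h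
    exact h
  obtain ⟨w, hwN, hw⟩ := hcov v0 hv0S.1 hv0S.2
  have hdu : inner ℝ u (v0 - w) = 0 := by
    rw [inner_sub_right, hv0S.2, (hN w hwN).2, sub_zero]
  have hd := hle _ hdu
  have hq0 : 0 ≤ q v0 := Finset.sum_nonneg fun _ _ => sq_nonneg _
  have hsum : q v0 ≤ 2 * q w + 2 * q (v0 - w) := by
    simp only [hq, Finset.mul_sum, ← Finset.sum_add_distrib]
    apply Finset.sum_le_sum
    intro ℓ _
    rw [inner_sub_right]
    nlinarith [sq_nonneg (inner ℝ (A ℓ) v0 - 2 * inner ℝ (A ℓ) w)]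
  have hn2 : ‖v0 - w‖ ^ 2 ≤ 1 / 4 := by
    have := norm_nonneg (v0 - w)
    nlinarith
  have hM : q v0 ≤ 8 * m := by
    have := h1 w hwN
    have h' : q w ≤ 2 * m := this
    nlinarith
  calc q v ≤ ‖v‖ ^ 2 * q v0 := hle v hv
    _ ≤ ‖v‖ ^ 2 * (8 * m) := by gcongr
    _ = _ := by ring

lemma net_transfer {m : ℕ} (A : Fin m → E) (u : E) (N : Finset E)
    (hN : ∀ w ∈ N, ‖w‖ = 1 ∧ inner ℝ u w = 0) (η ρ c ε : ℝ) (hη0 : 0 < η) (hη : η ≤ 1 / 2)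
    (hηρ : η ≤ ρ / 8) (hηc : η ≤ c / 8)
    (hcov : ∀ v : E, ‖v‖ = 1 → inner ℝ u v = 0 → ∃ w ∈ N, ‖v - w‖ ≤ η)
    (h0 : ∑ ℓ, (inner ℝ (A ℓ) u) ^ 2 ≤ 2 * m)
    (h1 : ∀ w ∈ N, ∑ ℓ, (inner ℝ (A ℓ) w) ^ 2 ≤ 2 * m)
    (h2 : ∀ w ∈ N, ∑ ℓ, phi (inner ℝ (A ℓ) u) * (inner ℝ (A ℓ) w) ^ 2 ≤ -ρ * m)
    (h3 : ∀ w ∈ N, |∑ ℓ, phi (inner ℝ (A ℓ) u) * inner ℝ (A ℓ) u * inner ℝ (A ℓ) w| ≤ ε * m)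
    (h4 : ∀ w ∈ N, c * m ≤ ∑ ℓ, |inner ℝ (A ℓ) u| * |inner ℝ (A ℓ) w|)
    (v : E) (hv1 : ‖v‖ = 1) (hv : inner ℝ u v = 0) :
    (∑ ℓ, phi (inner ℝ (A ℓ) u) * (inner ℝ (A ℓ) v) ^ 2 ≤ 0) ∧
    (|∑ ℓ, phi (inner ℝ (A ℓ) u) * inner ℝ (A ℓ) u * inner ℝ (A ℓ) v| ≤ (ε + 2 * η) * m) ∧
    (c / 2 * m ≤ ∑ ℓ, |inner ℝ (A ℓ) u| * |inner ℝ (A ℓ) v|) := by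
  have hq := net_q A u N hN η hη0 hη hcov h1
  obtain ⟨w, hwN, hw⟩ := hcov v hv1 hv
  obtain ⟨hw1, hwu⟩ := hN w hwN
  have hm : (0 : ℝ) ≤ m := by positivity
  have hd := hq (v - w) (by rw [inner_sub_right, hv, hwu, sub_zero])
  have hs := hq (v + w) (by rw [inner_add_right, hv, hwu, add_zero])
  have hd' : ∑ ℓ, (inner ℝ (A ℓ) (v - w)) ^ 2 ≤ 8 * m * η ^ 2 := by
    refine hd.trans ?_
    gcongr
  have hs' : ∑ ℓ, (inner ℝ (A ℓ) (v + w)) ^ 2 ≤ 32 * m := by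
    refine hs.trans ?_
    have h2 : ‖v + w‖ ≤ 2 := (norm_add_le _ _).trans (by rw [hv1, hw1]; norm_num)
    have : ‖v + w‖ ^ 2 ≤ 4 := by nlinarith [norm_nonneg (v + w)]
    nlinarith
  have hgd : ∑ ℓ, |inner ℝ (A ℓ) u| * |inner ℝ (A ℓ) (v - w)| ≤ 4 * η * m := by
    have : ∑ ℓ, |inner ℝ (A ℓ) u| * |inner ℝ (A ℓ) (v - w)| ≤
        ∑ ℓ, (η * (inner ℝ (A ℓ) u) ^ 2 + (1 / (4 * η)) * (inner ℝ (A ℓ) (v - w)) ^ 2) := by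
      apply Finset.sum_le_sum
      intro ℓ _
      rw [← sq_abs (inner ℝ (A ℓ) u), ← sq_abs (inner ℝ (A ℓ) (v - w))]
      generalize |inner ℝ (A ℓ) u| = x
      generalize |inner ℝ (A ℓ) (v - w)| = y
      have : η * x ^ 2 + 1 / (4 * η) * y ^ 2 - x * y = (2 * η * x - y) ^ 2 / (4 * η) := by
        field_simp; ring
      have h : 0 ≤ (2 * η * x - y) ^ 2 / (4 * η) := by positivity
      linarith
    rw [Finset.sum_add_distrib, ← Finset.mul_sum, ← Finset.mul_sum] at this
    have e1 : η * ∑ ℓ, (inner ℝ (A ℓ) u) ^ 2 ≤ η * (2 * m) := by gcongr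
    have e2 : (1 / (4 * η)) * ∑ ℓ, (inner ℝ (A ℓ) (v - w)) ^ 2 ≤ (1 / (4 * η)) * (8 * m * η ^ 2) := by
      gcongr
    have e3 : (1 / (4 * η)) * (8 * m * η ^ 2) = 2 * η * m := by field_simp; ring
    linarith
  have hds : ∑ ℓ, |inner ℝ (A ℓ) (v - w)| * |inner ℝ (A ℓ) (v + w)| ≤ 16 * η * m := by
    have : ∑ ℓ, |inner ℝ (A ℓ) (v - w)| * |inner ℝ (A ℓ) (v + w)| ≤
        ∑ ℓ, ((1 / η) * (inner ℝ (A ℓ) (v - w)) ^ 2 + (η / 4) * (inner ℝ (A ℓ) (v + w)) ^ 2) := by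
      apply Finset.sum_le_sum
      intro ℓ _
      rw [← sq_abs (inner ℝ (A ℓ) (v - w)), ← sq_abs (inner ℝ (A ℓ) (v + w))]
      generalize |inner ℝ (A ℓ) (v - w)| = x
      generalize |inner ℝ (A ℓ) (v + w)| = y
      have : 1 / η * x ^ 2 + η / 4 * y ^ 2 - x * y = (2 * x - η * y) ^ 2 / (4 * η) := by
        field_simp; ring
      have h : 0 ≤ (2 * x - η * y) ^ 2 / (4 * η) := by positivity
      linarith
    rw [Finset.sum_add_distrib, ← Finset.mul_sum, ← Finset.mul_sum] at this
    have e1 : (1 / η) * ∑ ℓ, (inner ℝ (A ℓ) (v - w)) ^ 2 ≤ (1 / η) * (8 * m * η ^ 2) := by gcongr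
    have e2 : η / 4 * ∑ ℓ, (inner ℝ (A ℓ) (v + w)) ^ 2 ≤ η / 4 * (32 * m) := by
      gcongr
    have e3 : (1 / η) * (8 * m * η ^ 2) = 8 * η * m := by field_simp
    linarith
  refine ⟨?_, ?_, ?_⟩
  · have : ∑ ℓ, phi (inner ℝ (A ℓ) u) * (inner ℝ (A ℓ) v) ^ 2 ≤
        ∑ ℓ, (phi (inner ℝ (A ℓ) u) * (inner ℝ (A ℓ) w) ^ 2 +
          1 / 2 * (|inner ℝ (A ℓ) (v - w)| * |inner ℝ (A ℓ) (v + w)|)) := by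
      apply Finset.sum_le_sum
      intro ℓ _
      have h := phi_abs_le (inner ℝ (A ℓ) u)
      have h5 : phi (inner ℝ (A ℓ) u) * (inner ℝ (A ℓ) (v - w) * inner ℝ (A ℓ) (v + w)) ≤
          1 / 2 * (|inner ℝ (A ℓ) (v - w)| * |inner ℝ (A ℓ) (v + w)|) := by
        refine (le_abs_self _).trans ?_
        rw [abs_mul, abs_mul]
        gcongr
      have h6 : inner ℝ (A ℓ) (v - w) * inner ℝ (A ℓ) (v + w) =
          (inner ℝ (A ℓ) v) ^ 2 - (inner ℝ (A ℓ) w) ^ 2 := by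
        rw [inner_sub_right, inner_add_right]; ring
      rw [h6] at h5
      linarith
    rw [Finset.sum_add_distrib, ← Finset.mul_sum] at this
    have := h2 w hwN
    nlinarith
  · have e : ∑ ℓ, phi (inner ℝ (A ℓ) u) * inner ℝ (A ℓ) u * inner ℝ (A ℓ) v =
        ∑ ℓ, phi (inner ℝ (A ℓ) u) * inner ℝ (A ℓ) u * inner ℝ (A ℓ) w +
        ∑ ℓ, phi (inner ℝ (A ℓ) u) * inner ℝ (A ℓ) u * inner ℝ (A ℓ) (v - w) := by
      rw [← Finset.sum_add_distrib]
      refine Finset.sum_congr rfl fun ℓ _ => ?_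
      rw [inner_sub_right]; ring
    have e2 : |∑ ℓ, phi (inner ℝ (A ℓ) u) * inner ℝ (A ℓ) u * inner ℝ (A ℓ) (v - w)| ≤
        1 / 2 * ∑ ℓ, |inner ℝ (A ℓ) u| * |inner ℝ (A ℓ) (v - w)| := by
      refine (Finset.abs_sum_le_sum_abs _ _).trans ?_
      rw [Finset.mul_sum]
      apply Finset.sum_le_sum
      intro ℓ _
      rw [abs_mul, abs_mul, mul_assoc]
      have h := phi_abs_le (inner ℝ (A ℓ) u)
      gcongr
    rw [e]
    refine (abs_add_le _ _).trans ?_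
    have := h3 w hwN
    linarith
  · have : ∑ ℓ, |inner ℝ (A ℓ) u| * |inner ℝ (A ℓ) w| ≤
        ∑ ℓ, |inner ℝ (A ℓ) u| * |inner ℝ (A ℓ) v| +
        ∑ ℓ, |inner ℝ (A ℓ) u| * |inner ℝ (A ℓ) (v - w)| := by
      rw [← Finset.sum_add_distrib]
      apply Finset.sum_le_sum
      intro ℓ _
      rw [← mul_add]
      gcongr
      rw [inner_sub_right]
      have := abs_sub_abs_le_abs_sub (inner ℝ (A ℓ) w) (inner ℝ (A ℓ) v)
      rw [abs_sub_comm] at this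
      linarith
    have := h4 w hwN
    nlinarith

/-- Deterministic core. -/
lemma det_core {m K : ℕ} (hm : 0 < m) (A : Fin m → E) (u : E) (N : Finset E)
    (hN : ∀ w ∈ N, ‖w‖ = 1 ∧ inner ℝ u w = 0) (η ρ c ε : ℝ) (hη0 : 0 < η) (hη : η ≤ 1 / 2)
    (hηρ : η ≤ ρ / 8) (hηc : η ≤ c / 8) (hρ : 0 < ρ) (hc : 0 < c)
    (hε : 40 * (ε + 2 * η) ≤ ρ * c)
    (hcov : ∀ v : E, ‖v‖ = 1 → inner ℝ u v = 0 → ∃ w ∈ N, ‖v - w‖ ≤ η)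
    (h0 : ∑ ℓ, (inner ℝ (A ℓ) u) ^ 2 ≤ 2 * m)
    (h00 : ρ * m ≤ ∑ ℓ, phi (inner ℝ (A ℓ) u) * (inner ℝ (A ℓ) u) ^ 2)
    (h1 : ∀ w ∈ N, ∑ ℓ, (inner ℝ (A ℓ) w) ^ 2 ≤ 2 * m)
    (h2 : ∀ w ∈ N, ∑ ℓ, phi (inner ℝ (A ℓ) u) * (inner ℝ (A ℓ) w) ^ 2 ≤ -ρ * m)
    (h3 : ∀ w ∈ N, |∑ ℓ, phi (inner ℝ (A ℓ) u) * inner ℝ (A ℓ) u * inner ℝ (A ℓ) w| ≤ ε * m)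
    (h4 : ∀ w ∈ N, c * m ≤ ∑ ℓ, |inner ℝ (A ℓ) u| * |inner ℝ (A ℓ) w|)
    (t : ℝ) (v : E) (w : Fin K → E) (hv : inner ℝ u v = 0) (hw : ∀ k, inner ℝ u (w k) = 0)
    (ht : ∑ k, ‖w k‖ ^ 2 ≤ t)
    (heq : ∀ ℓ, ∑ k, (inner ℝ (A ℓ) (w k)) ^ 2 + 2 * (inner ℝ (A ℓ) u * inner ℝ (A ℓ) v)
      = t * (inner ℝ (A ℓ) u) ^ 2) : t ≤ 0 := by
  have hq := net_q A u N hN η hη0 hη hcov h1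
  have htr := net_transfer A u N hN η ρ c ε hη0 hη hηρ hηc hcov h0 h1 h2 h3 h4
  have ht0 : 0 ≤ t := (Finset.sum_nonneg fun k _ => sq_nonneg _).trans ht
  have hm' : (0 : ℝ) < m := by exact_mod_cast hm
  have norm1 : ∀ z : E, z ≠ 0 → ‖‖z‖⁻¹ • z‖ = 1 := fun z hz => by
    rw [norm_smul, norm_inv, norm_norm, inv_mul_cancel₀ (norm_pos_iff.2 hz).ne']
  have orth1 : ∀ z : E, inner ℝ u z = 0 → inner ℝ u (‖z‖⁻¹ • z) = 0 := fun z hz => by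
    rw [real_inner_smul_right, hz, mul_zero]
  have f2 : ∀ z : E, inner ℝ u z = 0 →
      ∑ ℓ, phi (inner ℝ (A ℓ) u) * (inner ℝ (A ℓ) z) ^ 2 ≤ 0 := by
    intro z hz
    by_cases hz0 : z = 0
    · simp [hz0]
    have hnz : 0 < ‖z‖ := norm_pos_iff.2 hz0
    have h := (htr _ (norm1 z hz0) (orth1 z hz)).1
    have e : ∑ ℓ, phi (inner ℝ (A ℓ) u) * (inner ℝ (A ℓ) (‖z‖⁻¹ • z)) ^ 2 =
        (‖z‖⁻¹) ^ 2 * ∑ ℓ, phi (inner ℝ (A ℓ) u) * (inner ℝ (A ℓ) z) ^ 2 := by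
      rw [Finset.mul_sum]
      refine Finset.sum_congr rfl fun ℓ _ => ?_
      rw [real_inner_smul_right]; ring
    rw [e] at h
    have : 0 < (‖z‖⁻¹) ^ 2 := by positivity
    by_contra! hcon
    nlinarith [mul_pos this hcon]
  have f3 : |∑ ℓ, phi (inner ℝ (A ℓ) u) * inner ℝ (A ℓ) u * inner ℝ (A ℓ) v| ≤
      (ε + 2 * η) * m * ‖v‖ := by
    by_cases hz0 : v = 0
    · simp [hz0]
    have hnz : 0 < ‖v‖ := norm_pos_iff.2 hz0
    have h := (htr _ (norm1 v hz0) (orth1 v hv)).2.1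
    have e : ∑ ℓ, phi (inner ℝ (A ℓ) u) * inner ℝ (A ℓ) u * (inner ℝ (A ℓ) (‖v‖⁻¹ • v)) =
        ‖v‖⁻¹ * ∑ ℓ, phi (inner ℝ (A ℓ) u) * inner ℝ (A ℓ) u * (inner ℝ (A ℓ) v) := by
      rw [Finset.mul_sum]
      refine Finset.sum_congr rfl fun ℓ _ => ?_
      rw [real_inner_smul_right]; ring
    rw [e, abs_mul, abs_of_pos (inv_pos.2 hnz), inv_mul_le_iff₀ hnz] at h
    linarith
  have f4 : c / 2 * m * ‖v‖ ≤ ∑ ℓ, |inner ℝ (A ℓ) u| * |inner ℝ (A ℓ) v| := by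
    by_cases hz0 : v = 0
    · simp [hz0]
    have hnz : 0 < ‖v‖ := norm_pos_iff.2 hz0
    have h := (htr _ (norm1 v hz0) (orth1 v hv)).2.2
    have e : ∑ ℓ, |inner ℝ (A ℓ) u| * |inner ℝ (A ℓ) (‖v‖⁻¹ • v)| =
        ‖v‖⁻¹ * ∑ ℓ, |inner ℝ (A ℓ) u| * |inner ℝ (A ℓ) v| := by
      rw [Finset.mul_sum]
      refine Finset.sum_congr rfl fun ℓ _ => ?_
      rw [real_inner_smul_right, abs_mul, abs_of_pos (inv_pos.2 hnz)]; ring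
    rw [e, le_inv_mul_iff₀ hnz] at h
    linarith
  -- weighted sum
  have g1 : t * (ρ * m) ≤ 2 * ((ε + 2 * η) * m * ‖v‖) := by
    have e : ∑ ℓ, phi (inner ℝ (A ℓ) u) * (t * (inner ℝ (A ℓ) u) ^ 2) =
        ∑ k, ∑ ℓ, phi (inner ℝ (A ℓ) u) * (inner ℝ (A ℓ) (w k)) ^ 2 +
        2 * ∑ ℓ, phi (inner ℝ (A ℓ) u) * inner ℝ (A ℓ) u * (inner ℝ (A ℓ) v) := by
      rw [Finset.sum_comm, Finset.mul_sum, ← Finset.sum_add_distrib]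
      refine Finset.sum_congr rfl fun ℓ _ => ?_
      rw [← heq ℓ, ← Finset.mul_sum]; ring
    have e1 : ∑ k, ∑ ℓ, phi (inner ℝ (A ℓ) u) * (inner ℝ (A ℓ) (w k)) ^ 2 ≤ 0 :=
      Finset.sum_nonpos fun k _ => f2 _ (hw k)
    have e2 : ∑ ℓ, phi (inner ℝ (A ℓ) u) * (t * (inner ℝ (A ℓ) u) ^ 2) =
        t * ∑ ℓ, phi (inner ℝ (A ℓ) u) * (inner ℝ (A ℓ) u) ^ 2 := by
      rw [Finset.mul_sum]
      exact Finset.sum_congr rfl fun ℓ _ => by ring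
    have e3 := mul_le_mul_of_nonneg_left h00 ht0
    have e4 := (abs_le.1 f3).2
    linarith
  have g2 : 2 * (c / 2 * m * ‖v‖) ≤ 10 * m * t := by
    have e : 2 * ∑ ℓ, |inner ℝ (A ℓ) u| * |inner ℝ (A ℓ) v| ≤
        t * ∑ ℓ, (inner ℝ (A ℓ) u) ^ 2 + ∑ k, ∑ ℓ, (inner ℝ (A ℓ) (w k)) ^ 2 := by
      rw [Finset.sum_comm, Finset.mul_sum, Finset.mul_sum, ← Finset.sum_add_distrib]
      apply Finset.sum_le_sum
      intro ℓ _
      have h := heq ℓ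
      have p1 : 0 ≤ ∑ k, (inner ℝ (A ℓ) (w k)) ^ 2 := Finset.sum_nonneg fun k _ => sq_nonneg _
      have p2 : 0 ≤ t * (inner ℝ (A ℓ) u) ^ 2 := by positivity
      rw [← abs_mul]
      rcases abs_cases (inner ℝ (A ℓ) u * inner ℝ (A ℓ) v) with ⟨h', _⟩ | ⟨h', _⟩ <;>
      · rw [h']; linarith
    have e1 : ∑ k, ∑ ℓ, (inner ℝ (A ℓ) (w k)) ^ 2 ≤ 8 * m * t := by
      calc _ ≤ ∑ k, 8 * m * ‖w k‖ ^ 2 := Finset.sum_le_sum fun k _ => hq _ (hw k)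
        _ = 8 * m * ∑ k, ‖w k‖ ^ 2 := by rw [Finset.mul_sum]
        _ ≤ _ := by gcongr
    have e2 := mul_le_mul_of_nonneg_left h0 ht0
    linarith
  have g1' : t * ρ ≤ 2 * (ε + 2 * η) * ‖v‖ := by
    by_contra! hcon
    nlinarith [mul_lt_mul_of_pos_right hcon hm']
  have g2' : c * ‖v‖ ≤ 10 * t := by
    by_contra! hcon
    nlinarith [mul_lt_mul_of_pos_right hcon hm']
  by_contra! htpos
  have hvn := norm_nonneg v
  have a1 : t * ρ * c ≤ 2 * (ε + 2 * η) * (c * ‖v‖) := by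
    have := mul_le_mul_of_nonneg_right g1' hc.le
    linarith
  have a2 : 40 * (ε + 2 * η) * (c * ‖v‖) ≤ ρ * c * (c * ‖v‖) := by
    gcongr
  have a3 : ρ * c * (c * ‖v‖) ≤ ρ * c * (10 * t) := by gcongr
  have : 0 < t * ρ * c := by positivity
  linarith

end det

open scoped MatrixOrder Matrix.Norms.L2Operator in
lemma psd_factor {n : ℕ} (Z : Matrix (Fin n) (Fin n) ℝ) (hZ : Z.PosSemidef) :
    ∃ B : Matrix (Fin n) (Fin n) ℝ, Z = Bᴴ * B :=
  CStarAlgebra.nonneg_iff_eq_star_mul_self.1 (Matrix.nonneg_iff_posSemidef.2 hZ)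

lemma inner_toLp {n : ℕ} (a : Fin n → ℝ) (w : EuclideanSpace ℝ (Fin n)) :
    inner ℝ (WithLp.toLp 2 a : EuclideanSpace ℝ (Fin n)) w = ∑ i, a i * w i := by
  simp [PiLp.inner_apply, mul_comm]

/-- If every solution `(t, v, w)` of the lifted system has `t ≤ 0`, then `Z = x xᵀ`. -/
lemma matrix_core {n m : ℕ} (a : Fin m → Fin n → ℝ) (x : Fin n → ℝ) (r : ℝ)
    (u : EuclideanSpace ℝ (Fin n)) (hu : ‖u‖ = 1) (hx : ∀ i, x i = r * u i)
    (hcore : ∀ (t : ℝ) (v : EuclideanSpace ℝ (Fin n)) (w : Fin n → EuclideanSpace ℝ (Fin n)),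
      inner ℝ u v = 0 → (∀ k, inner ℝ u (w k) = 0) → ∑ k, ‖w k‖ ^ 2 ≤ t →
      (∀ ℓ, ∑ k, (inner ℝ (WithLp.toLp 2 (a ℓ) : EuclideanSpace ℝ (Fin n)) (w k)) ^ 2 +
        2 * (inner ℝ (WithLp.toLp 2 (a ℓ) : EuclideanSpace ℝ (Fin n)) u *
          inner ℝ (WithLp.toLp 2 (a ℓ) : EuclideanSpace ℝ (Fin n)) v)
        = t * (inner ℝ (WithLp.toLp 2 (a ℓ) : EuclideanSpace ℝ (Fin n)) u) ^ 2) → t ≤ 0)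
    (Z : Matrix (Fin n) (Fin n) ℝ) (hZ : Z.PosSemidef)
    (hm : ∀ ℓ, ∑ i, ∑ j, a ℓ i * a ℓ j * Z i j = (∑ i, a ℓ i * x i) ^ 2)
    (htr : Z.trace ≤ (Matrix.vecMulVec x x).trace) : Z = Matrix.vecMulVec x x := by
  obtain ⟨B, hB⟩ := psd_factor Z hZ
  let b : Fin n → EuclideanSpace ℝ (Fin n) := fun k => WithLp.toLp 2 (B k)
  have hZij : ∀ i j, Z i j = ∑ k, b k i * b k j := by
    intro i j
    rw [hB]
    simp [Matrix.mul_apply, b]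
  let β : Fin n → ℝ := fun k => inner ℝ u (b k)
  let w : Fin n → EuclideanSpace ℝ (Fin n) := fun k => b k - β k • u
  have huu : inner ℝ u u = 1 := by rw [real_inner_self_eq_norm_sq, hu]; norm_num
  have hw : ∀ k, inner ℝ u (w k) = 0 := by
    intro k
    simp only [w, inner_sub_right, real_inner_smul_right, huu, β]
    ring
  have hbw : ∀ k, b k = β k • u + w k := by intro k; simp [w]
  have hbn : ∀ k, ‖b k‖ ^ 2 = β k ^ 2 + ‖w k‖ ^ 2 := by
    intro k
    have h := real_inner_self_eq_norm_sq (b k)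
    rw [← h, hbw k]
    rw [inner_add_left, inner_add_right, inner_add_right, real_inner_smul_left,
      real_inner_smul_left, real_inner_smul_right, real_inner_smul_right, hw, huu,
      real_inner_comm, hw, real_inner_self_eq_norm_sq]
    ring
  have hsumu : ∑ i, u i ^ 2 = 1 := by
    have := EuclideanSpace.real_norm_sq_eq u
    rw [hu] at this
    linarith
  have htrX : (Matrix.vecMulVec x x).trace = r ^ 2 := by
    simp only [Matrix.trace, Matrix.diag, Matrix.vecMulVec_apply, hx]
    calc _ = r ^ 2 * ∑ i, u i ^ 2 := by
          rw [Finset.mul_sum]; exact Finset.sum_congr rfl fun i _ => by ring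
      _ = _ := by rw [hsumu, mul_one]
  have htrZ : Z.trace = ∑ k, (β k ^ 2 + ‖w k‖ ^ 2) := by
    simp only [Matrix.trace, Matrix.diag, hZij]
    rw [Finset.sum_comm]
    refine Finset.sum_congr rfl fun k _ => ?_
    rw [← hbn, EuclideanSpace.real_norm_sq_eq]
    exact Finset.sum_congr rfl fun i _ => by ring
  rw [htrX, htrZ, Finset.sum_add_distrib] at htr
  have hwt : ∑ k, ‖w k‖ ^ 2 ≤ r ^ 2 - ∑ k, β k ^ 2 := by linarith
  have ht := hcore (r ^ 2 - ∑ k, β k ^ 2) (∑ k, β k • w k) w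
    (by
      rw [inner_sum]
      exact Finset.sum_eq_zero fun k _ => by rw [real_inner_smul_right, hw, mul_zero])
    hw hwt
    (by
      intro ℓ
      set A : EuclideanSpace ℝ (Fin n) := WithLp.toLp 2 (a ℓ) with hA
      have h := hm ℓ
      have e1 : ∑ i, ∑ j, a ℓ i * a ℓ j * Z i j = ∑ k, (inner ℝ A (b k)) ^ 2 := by
        simp only [hA, inner_toLp, hZij, sq, Finset.sum_mul_sum]
        simp only [Finset.mul_sum]
        rw [Finset.sum_comm (s := (Finset.univ : Finset (Fin n))) (t := Finset.univ)
          (f := fun k i => ∑ j, a ℓ i * b k i * (a ℓ j * b k j))]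
        refine Finset.sum_congr rfl fun i _ => ?_
        rw [Finset.sum_comm]
        exact Finset.sum_congr rfl fun k _ => Finset.sum_congr rfl fun j _ => by ring
      have e2 : ∑ i, a ℓ i * x i = r * inner ℝ A u := by
        rw [hA, inner_toLp, Finset.mul_sum]
        exact Finset.sum_congr rfl fun i _ => by rw [hx]; ring
      rw [e1, e2] at h
      have e3 : ∑ k, (inner ℝ A (b k)) ^ 2 = (∑ k, β k ^ 2) * (inner ℝ A u) ^ 2 +
          2 * (inner ℝ A u * inner ℝ A (∑ k, β k • w k)) + ∑ k, (inner ℝ A (w k)) ^ 2 := by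
        rw [inner_sum, Finset.mul_sum, Finset.mul_sum, Finset.sum_mul, ← Finset.sum_add_distrib,
          ← Finset.sum_add_distrib]
        refine Finset.sum_congr rfl fun k _ => ?_
        rw [hbw k, inner_add_right, real_inner_smul_right, real_inner_smul_right]
        ring
      rw [e3] at h
      linarith)
  have hw0 : ∀ k, w k = 0 := by
    have h0 : ∑ k, ‖w k‖ ^ 2 = 0 :=
      le_antisymm (hwt.trans ht) (Finset.sum_nonneg fun k _ => sq_nonneg _)
    intro k
    have := (Finset.sum_eq_zero_iff_of_nonneg fun k _ => sq_nonneg _).1 h0 k (Finset.mem_univ k)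
    simpa using this
  have hβ : ∑ k, β k ^ 2 = r ^ 2 := by
    have : 0 ≤ ∑ k, ‖w k‖ ^ 2 := Finset.sum_nonneg fun k _ => sq_nonneg _
    linarith
  ext i j
  rw [hZij, Matrix.vecMulVec_apply, hx, hx]
  calc ∑ k, b k i * b k j = ∑ k, β k ^ 2 * (u i * u j) := by
        refine Finset.sum_congr rfl fun k _ => ?_
        rw [hbw k, hw0 k]
        simp
        ring
    _ = _ := by rw [← Finset.sum_mul, hβ]; ring

theorem phaselift_exact_recovery : ∃ C C' c : ℝ, 0 < C ∧ 0 < C' ∧ 0 < c ∧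
    ∀ (n m : ℕ) (x : Fin n → ℝ), (C * n ≤ m) →
      gaussianVectors n m
          {a : Fin m → Fin n → ℝ |
            ¬ ∀ Z : Matrix (Fin n) (Fin n) ℝ, Z.PosSemidef →
                (∀ ℓ, ∑ i, ∑ j, a ℓ i * a ℓ j * Z i j = (∑ i, a ℓ i * x i) ^ 2) →
                Z ≠ Matrix.vecMulVec x x →
                  (Matrix.vecMulVec x x).trace < Z.trace}
        ≤ ENNReal.ofReal (C' * Real.exp (-c * m)) := by
  obtain ⟨ρ, c, hρ, hc, hev⟩ := exists_events
  obtain ⟨η, hη0, hη, hηρ, hηc, hηρc⟩ : ∃ η : ℝ, 0 < η ∧ η ≤ 1 / 2 ∧ η ≤ ρ / 8 ∧ η ≤ c / 8 ∧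
      η ≤ ρ * c / 400 := by
    refine ⟨min (1 / 2) (min (ρ / 8) (min (c / 8) (ρ * c / 400))), ?_, ?_⟩
    · have : 0 < ρ * c := by positivity
      simp only [lt_min_iff]
      refine ⟨?_, ?_, ?_, ?_⟩ <;> positivity
    · simp
  obtain ⟨κ, hκ, H⟩ := hev (ρ * c / 100) (by positivity)
  set ε := ρ * c / 100 with hε
  set K : ℝ := 1 + 2 / η with hK
  have hK1 : 1 < K := by
    have : 0 < 2 / η := by positivity
    linarith
  have hlog : 0 < Real.log K := Real.log_pos hK1
  refine ⟨2 * Real.log K / κ, 7, κ / 2, by positivity, by norm_num, by positivity, ?_⟩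
  intro n m x hmn
  by_cases hx0 : x = 0
  · refine le_trans (le_of_eq ?_) zero_le
    convert measure_empty (μ := gaussianVectors n m)
    rw [Set.eq_empty_iff_forall_notMem]
    intro a ha
    apply ha
    intro Z hZ _ hne
    subst hx0
    have h0 : Matrix.vecMulVec (0 : Fin n → ℝ) (0 : Fin n → ℝ) = 0 := by ext; simp [Matrix.vecMulVec_apply]
    rw [h0] at hne ⊢
    rw [Matrix.trace_zero]
    refine lt_of_le_of_ne hZ.trace_nonneg fun h => hne ?_
    exact hZ.trace_eq_zero_iff.1 h.symm
  have hn : 0 < n := by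
    rcases Nat.eq_zero_or_pos n with h | h
    · subst h
      exact absurd (Subsingleton.elim _ _) hx0
    · exact h
  have hm : 0 < m := by
    have : 0 < 2 * Real.log K / κ * n := by positivity
    exact_mod_cast this.trans_le hmn
  set r : ℝ := ‖(WithLp.toLp 2 x : EuclideanSpace ℝ (Fin n))‖ with hr
  have hr0 : 0 < r := by
    rw [hr, norm_pos_iff]
    intro h
    apply hx0
    simpa using h
  set u : EuclideanSpace ℝ (Fin n) := r⁻¹ • WithLp.toLp 2 x with hu
  have hu1 : ‖u‖ = 1 := by
    rw [hu, norm_smul, norm_inv, ← hr, Real.norm_of_nonneg hr0.le, inv_mul_cancel₀ hr0.ne']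
  have hxu : ∀ i, x i = r * u i := by
    intro i
    simp [hu, hr0.ne']
  obtain ⟨N, hNs, hcov, hcard⟩ := exists_net η hη0
    {v : EuclideanSpace ℝ (Fin n) | ‖v‖ = 1 ∧ inner ℝ u v = 0} (fun c hc => hc.1.le)
  rw [finrank_euclideanSpace_fin] at hcard
  obtain ⟨Hu1, Hu2, Hw⟩ := H n m u hu1
  set e := ENNReal.ofReal (Real.exp (-κ * m)) with he
  set S1 : Set (Fin m → Fin n → ℝ) := {a | 0 ≤ ∑ ℓ, ((∑ i, a ℓ i * u i) ^ 2 - 2)} with hS1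
  set S2 : Set (Fin m → Fin n → ℝ) :=
    {a | 0 ≤ ∑ ℓ, (ρ - phi (∑ i, a ℓ i * u i) * (∑ i, a ℓ i * u i) ^ 2)} with hS2
  let W1 : EuclideanSpace ℝ (Fin n) → Set (Fin m → Fin n → ℝ) := fun w =>
    {a | 0 ≤ ∑ ℓ, ((∑ i, a ℓ i * w i) ^ 2 - 2)}
  let W2 : EuclideanSpace ℝ (Fin n) → Set (Fin m → Fin n → ℝ) := fun w =>
    {a | 0 ≤ ∑ ℓ, (phi (∑ i, a ℓ i * u i) * (∑ i, a ℓ i * w i) ^ 2 + ρ)}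
  let W3 : EuclideanSpace ℝ (Fin n) → Set (Fin m → Fin n → ℝ) := fun w =>
    {a | 0 ≤ ∑ ℓ, (phi (∑ i, a ℓ i * u i) * (∑ i, a ℓ i * u i) * (∑ i, a ℓ i * w i) - ε)}
  let W4 : EuclideanSpace ℝ (Fin n) → Set (Fin m → Fin n → ℝ) := fun w =>
    {a | 0 ≤ ∑ ℓ, (-(phi (∑ i, a ℓ i * u i) * (∑ i, a ℓ i * u i) * (∑ i, a ℓ i * w i)) - ε)}
  let W5 : EuclideanSpace ℝ (Fin n) → Set (Fin m → Fin n → ℝ) := fun w =>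
    {a | 0 ≤ ∑ ℓ, (c - |∑ i, a ℓ i * u i| * |∑ i, a ℓ i * w i|)}
  let W : EuclideanSpace ℝ (Fin n) → Set (Fin m → Fin n → ℝ) := fun w =>
    W1 w ∪ W2 w ∪ W3 w ∪ W4 w ∪ W5 w
  have hWw : ∀ w ∈ N, gaussianVectors n m (W w) ≤ 5 * e := by
    intro w hw
    obtain ⟨a1, a2, a3, a4, a5⟩ := Hw w (hNs w hw).1 (hNs w hw).2
    calc gaussianVectors n m (W w) ≤ e + e + e + e + e := by
          refine (measure_union_le _ _).trans (add_le_add ?_ a5)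
          refine (measure_union_le _ _).trans (add_le_add ?_ a4)
          refine (measure_union_le _ _).trans (add_le_add ?_ a3)
          exact (measure_union_le _ _).trans (add_le_add a1 a2)
      _ = 5 * e := by ring
  have hsub : {a : Fin m → Fin n → ℝ |
            ¬ ∀ Z : Matrix (Fin n) (Fin n) ℝ, Z.PosSemidef →
                (∀ ℓ, ∑ i, ∑ j, a ℓ i * a ℓ j * Z i j = (∑ i, a ℓ i * x i) ^ 2) →
                Z ≠ Matrix.vecMulVec x x →
                  (Matrix.vecMulVec x x).trace < Z.trace} ⊆ S1 ∪ S2 ∪ ⋃ w ∈ N, W w := by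
    intro a ha
    by_contra hcon
    apply ha
    simp only [Set.mem_union, Set.mem_iUnion, not_or, not_exists] at hcon
    obtain ⟨⟨b1, b2⟩, b3⟩ := hcon
    intro Z hZ hmeas hne
    by_contra! htr
    apply hne
    refine matrix_core a x r u hu1 hxu ?_ Z hZ hmeas htr
    intro t v w hv hw ht heq
    rw [hS1, Set.mem_ofPred_eq, not_le, Finset.sum_sub_distrib] at b1
    rw [hS2, Set.mem_ofPred_eq, not_le, Finset.sum_sub_distrib] at b2
    simp only [Finset.sum_const, Finset.card_univ, Fintype.card_fin, nsmul_eq_mul] at b1 b2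
    have b3' : ∀ w ∈ N, (∑ ℓ, (∑ i, a ℓ i * w i) ^ 2 ≤ 2 * m) ∧
        (∑ ℓ, phi (∑ i, a ℓ i * u i) * (∑ i, a ℓ i * w i) ^ 2 ≤ -ρ * m) ∧
        (|∑ ℓ, phi (∑ i, a ℓ i * u i) * (∑ i, a ℓ i * u i) * (∑ i, a ℓ i * w i)| ≤ ε * m) ∧
        (c * m ≤ ∑ ℓ, |∑ i, a ℓ i * u i| * |∑ i, a ℓ i * w i|) := by
      intro w hw
      have := b3 w hw
      simp only [W, W1, W2, W3, W4, W5, Set.mem_union, not_or, Set.mem_ofPred_eq, not_le,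
        Finset.sum_sub_distrib, Finset.sum_add_distrib, Finset.sum_neg_distrib,
        Finset.sum_const, Finset.card_univ, Fintype.card_fin, nsmul_eq_mul] at this
      obtain ⟨⟨⟨⟨c1, c2⟩, c3⟩, c4⟩, c5⟩ := this
      refine ⟨by linarith, by linarith, ?_, by linarith⟩
      rw [abs_le]
      constructor <;> linarith
    refine det_core hm (fun ℓ => WithLp.toLp 2 (a ℓ)) u N hNs η ρ c ε hη0 hη hηρ hηc hρ hc
      ?_ (fun v h1 h2 => hcov v ⟨h1, h2⟩) ?_ ?_ ?_ ?_ ?_ ?_ t v w hv hw ht heq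
    · have : 0 < ρ * c := by positivity
      rw [hε]; linarith
    · simp only [inner_toLp]; linarith
    · simp only [inner_toLp]; linarith
    · simp only [inner_toLp]; exact fun w hw => (b3' w hw).1
    · simp only [inner_toLp]; exact fun w hw => (b3' w hw).2.1
    · simp only [inner_toLp]; exact fun w hw => (b3' w hw).2.2.1
    · simp only [inner_toLp]; exact fun w hw => (b3' w hw).2.2.2
  have hreal : (2 + 5 * (N.card : ℝ)) * Real.exp (-κ * m) ≤ 7 * Real.exp (-(κ / 2) * m) := by
    have hKn : 1 ≤ K ^ n := one_le_pow₀ hK1.le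
    have h1 : 2 + 5 * (N.card : ℝ) ≤ 7 * K ^ n := by linarith
    have h2 : K ^ n ≤ Real.exp (κ / 2 * m) := by
      rw [← Real.exp_log (pow_pos (by linarith : 0 < K) n), Real.log_pow]
      apply Real.exp_le_exp.2
      have h3 := mul_le_mul_of_nonneg_left hmn (by positivity : 0 ≤ κ / 2)
      have h4 : κ / 2 * (2 * Real.log K / κ * n) = n * Real.log K := by field_simp
      linarith
    calc (2 + 5 * (N.card : ℝ)) * Real.exp (-κ * m) ≤
          (7 * Real.exp (κ / 2 * m)) * Real.exp (-κ * m) := by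
          gcongr
          linarith
      _ = 7 * Real.exp (-(κ / 2) * m) := by
          rw [mul_assoc, ← Real.exp_add]
          congr 2
          ring
  calc _ ≤ gaussianVectors n m (S1 ∪ S2 ∪ ⋃ w ∈ N, W w) := measure_mono hsub
    _ ≤ (e + e) + ∑ w ∈ N, 5 * e := by
        refine (measure_union_le _ _).trans (add_le_add ?_ ?_)
        · exact (measure_union_le _ _).trans (add_le_add Hu1 Hu2)
        · exact (measure_biUnion_finset_le _ _).trans (Finset.sum_le_sum hWw)
    _ = ENNReal.ofReal ((2 + 5 * (N.card : ℝ)) * Real.exp (-κ * m)) := by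
        rw [ENNReal.ofReal_mul (by positivity), ENNReal.ofReal_add (by norm_num) (by positivity),
          ENNReal.ofReal_mul (by norm_num), ENNReal.ofReal_natCast, ← he]
        simp
        ring
    _ ≤ _ := ENNReal.ofReal_le_ofReal hreal
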